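/- Let (R, m, k) be a Noetherian local ring of characteristic p > 0, let G• be a bounded-below complex of finitely generated free R-modules whose homology modules all have finite length, and suppose N is a finitely generated R-module of dimension t. Then for each i ≥ 0, the lengths λ(H_i(F^e(G•) ⊗_R N)) are finite for all e, and λ(H_i(F^e(G•) ⊗_R N)) = O(q^t) as q = p^e → ∞. -/

import Mathlib

/-- The linear map `Nⁿ → Nᵐ` induced by an `m × n` matrix over `R`. -/
noncomputable def matVec {R : Type*} [CommRing R] {m n : ℕ} (A : Matrix (Fin m) (Fin n) R)
    (N : Type*) [AddCommGroup N] [Module R N] : (Fin n → N) →ₗ[R] (Fin m → N) where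
  toFun v := fun i => ∑ j, A i j • v j
  map_add' v w := by
    funext i
    simp [smul_add, Finset.sum_add_distrib]
  map_smul' c v := by
    funext i
    simp [Finset.smul_sum, smul_comm c]

/-- The length of an `R`-module `M`: the Krull dimension of its lattice of submodules. -/
noncomputable def moduleLength (R M : Type*) [Ring R] [AddCommGroup M] [Module R M] :
    WithBot ℕ∞ :=
  Order.krullDim (Submodule R M)

/-- The length of the `i`-th homology module of the complex
`… → N^{r(j+1)} → N^{r j} → … → N^{r 0} → 0` obtained by applying the matrices
`A j : Matrix (Fin (r j)) (Fin (r (j+1))) R` (the differentials of a bounded-below complex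
of finite free modules) to `N`. -/
noncomputable def homologyLength {R : Type*} [CommRing R] (r : ℕ → ℕ)
    (A : ∀ j, Matrix (Fin (r j)) (Fin (r (j + 1))) R)
    (N : Type*) [AddCommGroup N] [Module R N] : ℕ → WithBot ℕ∞
  | 0 => moduleLength R ((Fin (r 0) → N) ⧸ LinearMap.range (matVec (A 0) N))
  | (j + 1) => moduleLength R
      (↥(LinearMap.ker (matVec (A j) N)) ⧸
        (Submodule.comap (LinearMap.ker (matVec (A j) N)).subtype
          (LinearMap.range (matVec (A (j + 1)) N))))

section Length

open Pointwise

variable {R : Type*} [CommRing R] {M M₁ M₃ : Type*} [AddCommGroup M] [Module R M]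
  [AddCommGroup M₁] [Module R M₁] [AddCommGroup M₃] [Module R M₃]

theorem Module.length_quotient_le_of_ker_le (g : M →ₗ[R] M₃) (P : Submodule R M)
    (h : LinearMap.ker g ≤ P) : Module.length R (M ⧸ P) ≤ Module.length R M₃ := by
  refine (Module.length_le_of_surjective (Submodule.factor h)
    (Submodule.factor_surjective h)).trans ?_
  rw [g.quotKerEquivRange.length_eq]
  exact Module.length_le_of_injective _ (Submodule.subtype_injective _)

theorem Module.length_le_add_of_ker_le_range (f : M₁ →ₗ[R] M) (g : M →ₗ[R] M₃)
    (h : LinearMap.ker g ≤ LinearMap.range f) :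
    Module.length R M ≤ Module.length R M₁ + Module.length R M₃ := by
  rw [Module.length_eq_add_of_exact (LinearMap.range f).subtype (LinearMap.range f).mkQ
    (Submodule.subtype_injective _) (Submodule.mkQ_surjective _)
    (LinearMap.exact_subtype_mkQ _)]
  exact add_le_add
    (Module.length_le_of_surjective f.rangeRestrict f.surjective_rangeRestrict)
    (Module.length_quotient_le_of_ker_le g _ h)

theorem Module.length_le_mul_length_quotSMulTop (x : R) (q : ℕ) (M : Type*) [AddCommGroup M]
    [Module R M] (h : ∀ m : M, x ^ q • m = 0) :
    Module.length R M ≤ q * Module.length R (QuotSMulTop x M) := by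
  induction q generalizing M with
  | zero =>
    have : Subsingleton M := ⟨fun a b => by
      rw [← one_smul R a, ← one_smul R b, ← pow_zero x, h, h]⟩
    simp
  | succ q ih =>
    let f : M →ₗ[R] (x • (⊤ : Submodule R M) : Submodule R M) :=
      (LinearMap.lsmul R M x).codRestrict _
        fun m => Submodule.smul_mem_pointwise_smul m x ⊤ trivial
    have hf : Function.Surjective f := by
      rintro ⟨m, hm⟩
      obtain ⟨n, -, rfl⟩ := (Submodule.mem_smul_pointwise_iff_exists _ _ _).1 hm
      exact ⟨n, rfl⟩
    have hkill : ∀ m : (x • (⊤ : Submodule R M) : Submodule R M), x ^ q • m = 0 := by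
      intro m
      obtain ⟨n, rfl⟩ := hf m
      rw [← map_smul]
      ext
      change x • x ^ q • n = 0
      rw [smul_smul, ← pow_succ', h]
    rw [Module.length_eq_add_of_exact (x • (⊤ : Submodule R M)).subtype
      (x • (⊤ : Submodule R M)).mkQ (Submodule.subtype_injective _)
      (Submodule.mkQ_surjective _) (LinearMap.exact_subtype_mkQ _)]
    push_cast
    rw [add_mul, one_mul]
    gcongr
    refine (ih _ hkill).trans ?_
    gcongr
    exact Module.length_le_of_surjective (QuotSMulTop.map x f) (QuotSMulTop.map_surjective x hf)

theorem IsLocalRing.exists_pow_smul_eq_zero_of_length_ne_top [IsLocalRing R]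
    (hM : Module.length R M ≠ ⊤) {x : R} (hx : x ∈ IsLocalRing.maximalIdeal R) :
    ∃ n : ℕ, ∀ m : M, x ^ n • m = 0 := by
  obtain ⟨_, _⟩ := isFiniteLength_iff_isNoetherian_isArtinian.1 (Module.length_ne_top_iff.1 hM)
  obtain ⟨n, hn⟩ := IsArtinian.range_smul_pow_stabilizes M x
  refine ⟨n, fun m => ?_⟩
  have hbot : LinearMap.range (x ^ n • LinearMap.id : M →ₗ[R] M) = ⊥ := by
    refine Submodule.eq_bot_of_le_smul_of_le_jacobson_bot (Ideal.span {x}) _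
      (IsNoetherian.noetherian _) ?_ ?_
    · intro y hy
      rw [hn (n + 1) (Nat.le_succ n)] at hy
      obtain ⟨z, rfl⟩ := hy
      rw [Submodule.ideal_span_singleton_smul]
      refine (Submodule.mem_smul_pointwise_iff_exists _ _ _).2 ⟨x ^ n • z, ⟨z, rfl⟩, ?_⟩
      simp [smul_smul, pow_succ']
    · rw [Ideal.span_singleton_le_iff_mem, IsLocalRing.jacobson_eq_maximalIdeal _ bot_ne_top]
      exact hx
  exact (Submodule.eq_bot_iff _).1 hbot _ ⟨m, rfl⟩

end Length

section Homology

open Pointwise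

variable {R : Type*} [CommRing R] {a b c : ℕ} (D : Matrix (Fin a) (Fin b) R)
  (E : Matrix (Fin b) (Fin c) R) {N N' N'' : Type*} [AddCommGroup N] [Module R N]
  [AddCommGroup N'] [Module R N'] [AddCommGroup N''] [Module R N'']

theorem matVec_apply (v : Fin b → N) (i : Fin a) : matVec D N v i = ∑ j, D i j • v j := rfl

theorem matVec_matVec (v : Fin c → N) :
    matVec D N (matVec E N v) = matVec (D * E) N v := by
  funext i
  simp only [matVec_apply, Matrix.mul_apply, Finset.smul_sum, Finset.sum_smul, smul_smul]
  exact Finset.sum_comm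

theorem matVec_smul_one (x : R) (v : Fin b → N) :
    matVec (x • (1 : Matrix (Fin b) (Fin b) R)) N v = x • v := by
  funext i
  simp [matVec_apply, Matrix.one_apply, ite_smul]

theorem matVec_add (D' : Matrix (Fin a) (Fin b) R) (v : Fin b → N) :
    matVec (D + D') N v = matVec D N v + matVec D' N v := by
  funext i
  simp [matVec_apply, add_smul, Finset.sum_add_distrib]

theorem matVec_compLeft (f : N →ₗ[R] N') (v : Fin b → N) :
    matVec D N' (f.compLeft _ v) = f.compLeft _ (matVec D N v) := by
  funext i
  simp [matVec_apply]

/-- The homology at the middle term of `Nᶜ → Nᵇ → Nᵃ`, the maps being given by matrices. -/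
abbrev MatHomology (N : Type*) [AddCommGroup N] [Module R N] : Type _ :=
  ↥(LinearMap.ker (matVec D N)) ⧸
    (Submodule.comap (LinearMap.ker (matVec D N)).subtype (LinearMap.range (matVec E N)))

/-- The map induced on homology by a linear map of coefficient modules. -/
noncomputable def MatHomology.map (f : N →ₗ[R] N') : MatHomology D E N →ₗ[R] MatHomology D E N' :=
  Submodule.mapQ _ _
    ((f.compLeft (Fin b)).restrict (p := LinearMap.ker (matVec D N))
      (q := LinearMap.ker (matVec D N')) fun v hv => by
        rw [LinearMap.mem_ker] at hv ⊢
        rw [matVec_compLeft, hv, map_zero])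
    (by
      rintro ⟨v, hv⟩ ⟨w, hw⟩
      exact ⟨f.compLeft _ w, by rw [matVec_compLeft, hw]; rfl⟩)

theorem MatHomology.mk_eq_zero_iff (v : LinearMap.ker (matVec D N)) :
    (Submodule.Quotient.mk v : MatHomology D E N) = 0 ↔ ∃ w, matVec E N w = v := by
  rw [Submodule.Quotient.mk_eq_zero]
  rfl

theorem MatHomology.map_mk_eq_zero_iff (f : N →ₗ[R] N') (v : LinearMap.ker (matVec D N)) :
    MatHomology.map D E f (Submodule.Quotient.mk v) = 0 ↔
      ∃ w, matVec E N' w = f.compLeft _ v.1 :=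
  MatHomology.mk_eq_zero_iff D E _

theorem MatHomology.length_le : Module.length R (MatHomology D E N) ≤ b * Module.length R N := by
  refine (Module.length_le_of_surjective _ (Submodule.mkQ_surjective _)).trans
    ((Module.length_le_of_injective _ (Submodule.subtype_injective _)).trans ?_)
  simp

variable {D E}

theorem MatHomology.ker_map_le_range_map (hDE : D * E = 0) (f : N' →ₗ[R] N) (g : N →ₗ[R] N'')
    (hf : Function.Injective f) (hg : Function.Surjective g) (hfg : Function.Exact f g) :
    LinearMap.ker (MatHomology.map D E g) ≤ LinearMap.range (MatHomology.map D E f) := by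
  intro z hz
  obtain ⟨⟨v, hv⟩, rfl⟩ := Submodule.Quotient.mk_surjective _ z
  obtain ⟨w, hw⟩ := (MatHomology.map_mk_eq_zero_iff D E g _).1 hz
  choose w' hw' using fun i => hg (w i)
  obtain rfl : g.compLeft _ w' = w := funext hw'
  rw [matVec_compLeft] at hw
  have hu : ∀ i, ∃ u, f u = (v - matVec E N w') i := fun i => by
    refine (hfg _).1 ?_
    have := congrFun hw i
    simp only [LinearMap.compLeft_apply, Function.comp_apply] at this
    simp [this]
  choose u hu using hu
  have hu' : f.compLeft _ u = v - matVec E N w' := funext hu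
  have hDu : matVec D N' u = 0 := by
    have h0 : f.compLeft _ (matVec D N' u) = 0 := by
      rw [← matVec_compLeft, hu', map_sub, LinearMap.mem_ker.1 hv, matVec_matVec, hDE]
      funext i
      simp [matVec_apply]
    funext i
    exact hf (by simpa using congrFun h0 i)
  refine ⟨Submodule.Quotient.mk ⟨u, hDu⟩, ?_⟩
  refine (Submodule.Quotient.eq _).2 ⟨-w', ?_⟩
  change matVec E N (-w') = f.compLeft _ u - v
  rw [hu', map_neg]
  abel

theorem MatHomology.length_le_add (hDE : D * E = 0) (f : N' →ₗ[R] N) (g : N →ₗ[R] N'')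
    (hf : Function.Injective f) (hg : Function.Surjective g) (hfg : Function.Exact f g) :
    Module.length R (MatHomology D E N) ≤
      Module.length R (MatHomology D E N') + Module.length R (MatHomology D E N'') :=
  Module.length_le_add_of_ker_le_range _ _ (ker_map_le_range_map hDE f g hf hg hfg)

theorem MatHomology.length_quotSMulTop_le (hDE : D * E = 0) {x : R} (hx : IsSMulRegular N x) :
    Module.length R (QuotSMulTop x (MatHomology D E N)) ≤
      Module.length R (MatHomology D E (QuotSMulTop x N)) := by
  refine Module.length_quotient_le_of_ker_le
    (MatHomology.map D E (x • (⊤ : Submodule R N)).mkQ) _ ?_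
  refine (ker_map_le_range_map hDE (LinearMap.lsmul R N x) _ hx (Submodule.mkQ_surjective _)
    fun n => ?_).trans ?_
  · rw [Submodule.mkQ_apply, Submodule.Quotient.mk_eq_zero,
      Submodule.mem_smul_pointwise_iff_exists]
    simp
  · rintro _ ⟨z, rfl⟩
    obtain ⟨v, rfl⟩ := Submodule.Quotient.mk_surjective _ z
    exact Submodule.smul_mem_pointwise_smul (Submodule.Quotient.mk v : MatHomology D E N) x ⊤
      trivial

/-- A scalar whose multiplication map is null-homotopic annihilates homology. -/
theorem MatHomology.smul_eq_zero {x : R} {h : Matrix (Fin c) (Fin b) R}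
    {k : Matrix (Fin b) (Fin a) R} (hx : E * h + k * D = x • 1) (z : MatHomology D E N) :
    x • z = 0 := by
  obtain ⟨v, rfl⟩ := Submodule.Quotient.mk_surjective _ z
  rw [← Submodule.Quotient.mk_smul, MatHomology.mk_eq_zero_iff]
  refine ⟨matVec h N v, ?_⟩
  change _ = x • v.1
  rw [← matVec_smul_one, ← hx, matVec_add, ← matVec_matVec, ← matVec_matVec k,
    LinearMap.mem_ker.1 v.2, map_zero, add_zero]

/-- If the homology over `R` has finite length, then a matrix of cycles becomes a matrix of
boundaries after multiplication by a power of any element of the maximal ideal. -/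
theorem MatHomology.exists_pow_smul_eq_mul [IsLocalRing R]
    (hfin : Module.length R (MatHomology D E R) ≠ ⊤) {x : R}
    (hx : x ∈ IsLocalRing.maximalIdeal R) {d : ℕ} (M : Matrix (Fin b) (Fin d) R)
    (hM : D * M = 0) : ∃ (n : ℕ) (h : Matrix (Fin c) (Fin d) R), x ^ n • M = E * h := by
  obtain ⟨n, hn⟩ := IsLocalRing.exists_pow_smul_eq_zero_of_length_ne_top hfin hx
  have hcol : ∀ j, (fun i => M i j) ∈ LinearMap.ker (matVec D R) := fun j => by
    rw [LinearMap.mem_ker]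
    funext i
    simpa [Matrix.mul_apply, matVec_apply] using congrFun (congrFun hM i) j
  have hbd : ∀ j, ∃ w, matVec E R w = x ^ n • fun i => M i j := fun j => by
    have := hn (Submodule.Quotient.mk ⟨_, hcol j⟩)
    rw [← Submodule.Quotient.mk_smul, MatHomology.mk_eq_zero_iff] at this
    exact this
  choose w hw using hbd
  refine ⟨n, fun i j => w j i, ?_⟩
  ext i j
  exact (congrFun (hw j) i).symm

/-- Homology with coefficients in modules of bounded dimension grows polynomially along the
Frobenius powers, as soon as some power of each element of the maximal ideal is null-homotopic. -/
theorem MatHomology.exists_length_frobenius_le [IsNoetherianRing R] [IsLocalRing R] (p : ℕ)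
    [Fact p.Prime] [CharP R p] (hDE : D * E = 0)
    (hnull : ∀ x ∈ IsLocalRing.maximalIdeal R, ∃ (n : ℕ) (h : Matrix (Fin c) (Fin b) R)
      (k : Matrix (Fin b) (Fin a) R), E * h + k * D = x ^ n • 1)
    (t : ℕ) (N : Type*) [AddCommGroup N] [Module R N] [Module.Finite R N]
    (ht : Module.supportDim R N ≤ t) :
    ∃ C : ℕ, ∀ e : ℕ, Module.length R
      (MatHomology (D.map (· ^ p ^ e)) (E.map (· ^ p ^ e)) N) ≤ (C * (p ^ e) ^ t : ℕ) := by
  have hmul : ∀ (e : ℕ) {l m n : ℕ} (X : Matrix (Fin l) (Fin m) R) (Y : Matrix (Fin m) (Fin n) R),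
      (X * Y).map (· ^ p ^ e) = X.map (· ^ p ^ e) * Y.map (· ^ p ^ e) :=
    fun e _ _ _ X Y => Matrix.map_mul (f := iterateFrobenius R p e)
  have hDEe : ∀ e, D.map (· ^ p ^ e) * E.map (· ^ p ^ e) = 0 := fun e => by
    rw [← hmul, hDE]
    ext i j
    simp [(Fact.out : p.Prime).ne_zero]
  have hpos : ∀ e t : ℕ, 1 ≤ (p ^ e) ^ t := fun e t =>
    Nat.one_le_pow _ _ (Nat.one_le_pow _ _ (Fact.out : p.Prime).pos)
  induction t using Nat.strong_induction_on generalizing N with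
  | _ t iht =>
  revert ht
  refine IsNoetherianRing.induction_on_isQuotientEquivQuotientPrime R (M := N) inferInstance
    (motive := fun N _ _ _ => Module.supportDim R N ≤ t → ∃ C : ℕ, ∀ e : ℕ, Module.length R
      (MatHomology (D.map (· ^ p ^ e)) (E.map (· ^ p ^ e)) N) ≤ (C * (p ^ e) ^ t : ℕ))
    ?_ ?_ ?_
  · intro N _ _ _ _ _
    refine ⟨0, fun e => (MatHomology.length_le _ _).trans ?_⟩
    simp
  · intro N _ _ _ P f ht
    by_cases hP : IsLocalRing.maximalIdeal R ≤ P.1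
    · have hmax : P.1.IsMaximal := by
        rw [← (IsLocalRing.maximalIdeal.isMaximal R).eq_of_le P.2.ne_top hP]
        infer_instance
      have hsimple : IsSimpleModule R (R ⧸ P.1) :=
        isSimpleModule_iff_isCoatom.2 (Ideal.isMaximal_def.1 hmax)
      refine ⟨b, fun e => (MatHomology.length_le _ _).trans ?_⟩
      rw [f.length_eq, Module.length_eq_one, mul_one]
      exact_mod_cast Nat.le_mul_of_pos_right b (hpos e t)
    · obtain ⟨x, hxm, hxP⟩ := SetLike.not_le_iff_exists.1 hP
      obtain ⟨n, h, k, hhk⟩ := hnull x hxm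
      have hregx : IsSMulRegular N x := by
        refine isSMulRegular_iff_right_eq_zero_of_smul.2 fun m hm => ?_
        obtain ⟨s, hs⟩ := Ideal.Quotient.mk_surjective (f m)
        have h0 : Ideal.Quotient.mk P.1 (x * s) = 0 := by
          have : x • f m = 0 := by rw [← map_smul, hm, map_zero]
          rw [← hs] at this
          exact this
        rw [Ideal.Quotient.eq_zero_iff_mem] at h0
        have hsP := (P.2.mem_or_mem h0).resolve_left hxP
        rw [Ideal.Quotient.eq_zero_iff_mem.2 hsP] at hs
        exact f.injective (by rw [← hs, map_zero])
      have hreg : IsSMulRegular N (x ^ n) := hregx.pow n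
      have hdim : Module.supportDim R (QuotSMulTop (x ^ n) N) + 1 ≤ t :=
        (Module.supportDim_quotSMulTop_succ_le_of_notMem_minimalPrimes
          fun _ => hreg.notMem_of_mem_minimalPrimes).trans ht
      have hbound : ∀ e, Module.length R
          (MatHomology (D.map (· ^ p ^ e)) (E.map (· ^ p ^ e)) N) ≤ (p ^ e : ℕ) * Module.length R
          (MatHomology (D.map (· ^ p ^ e)) (E.map (· ^ p ^ e)) (QuotSMulTop (x ^ n) N)) := by
        intro e
        refine (Module.length_le_mul_length_quotSMulTop (x ^ n) (p ^ e) _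
          (MatHomology.smul_eq_zero (h := h.map (· ^ p ^ e)) (k := k.map (· ^ p ^ e)) ?_)).trans
          (by gcongr; exact MatHomology.length_quotSMulTop_le (hDEe e) hreg)
        rw [← hmul, ← hmul]
        have hF := congrArg (fun X => X.map (iterateFrobenius R p e)) hhk
        rw [Matrix.map_add _ (map_add _)] at hF
        refine hF.trans ?_
        ext i j
        by_cases hij : i = j <;>
          simp [hij, iterateFrobenius_def, (Fact.out : p.Prime).ne_zero]
      cases t with
      | zero =>
        have hsub : Subsingleton (QuotSMulTop (x ^ n) N) := by
          rw [← Module.supportDim_eq_bot_iff_subsingleton R]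
          by_contra hne
          have h1 : (1 : WithBot ℕ∞) ≤ Module.supportDim R (QuotSMulTop (x ^ n) N) + 1 := by
            obtain ⟨d, hd⟩ := WithBot.ne_bot_iff_exists.1 hne
            rw [← hd]
            exact_mod_cast le_add_self
          exact absurd (h1.trans hdim) (by decide)
        exact ⟨0, fun e => (hbound e).trans (by simp)⟩
      | succ s =>
        obtain ⟨C, hC⟩ := iht s (Nat.lt_succ_self s) (QuotSMulTop (x ^ n) N) (by
          push_cast at hdim
          generalize Module.supportDim R (QuotSMulTop (x ^ n) N) = d at hdim ⊢
          induction d with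
          | bot => exact bot_le
          | coe d =>
            have hd : d + 1 ≤ (s : ℕ∞) + 1 := by exact_mod_cast hdim
            exact_mod_cast (ENat.add_le_add_iff_right ENat.one_ne_top).1 hd)
        refine ⟨C, fun e => (hbound e).trans ((mul_le_mul_right (hC e) _).trans ?_)⟩
        rw [← Nat.cast_mul]
        exact_mod_cast le_of_eq (by ring)
  · intro N₁ _ _ _ N₂ _ _ _ N₃ _ _ _ f g hf hg hfg ih₁ ih₃ ht
    obtain ⟨C₁, hC₁⟩ := ih₁ ((Module.supportDim_le_of_injective f hf).trans ht)
    obtain ⟨C₃, hC₃⟩ := ih₃ ((Module.supportDim_le_of_surjective g hg).trans ht)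
    refine ⟨C₁ + C₃, fun e => (MatHomology.length_le_add (hDEe e) f g hf hg hfg).trans ?_⟩
    refine (add_le_add (hC₁ e) (hC₃ e)).trans ?_
    rw [add_mul]
    push_cast
    rfl

end Homology

section Complex

variable {R : Type*} [CommRing R]

/-- The rank of the target of the differential leaving degree `i`. -/
def outRank (r : ℕ → ℕ) : ℕ → ℕ
  | 0 => 0
  | i + 1 => r i

/-- The matrix of the differential leaving degree `i`, which is empty when `i = 0`. -/
def outMatrix (r : ℕ → ℕ) (A : ∀ j, Matrix (Fin (r j)) (Fin (r (j + 1))) R) :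
    ∀ i, Matrix (Fin (outRank r i)) (Fin (r i)) R
  | 0 => 0
  | i + 1 => A i

variable (r : ℕ → ℕ) (A : ∀ j, Matrix (Fin (r j)) (Fin (r (j + 1))) R)

theorem outMatrix_map (φ : R → R) (i : ℕ) :
    outMatrix r (fun j => (A j).map φ) i = (outMatrix r A i).map φ := by
  cases i with
  | zero => exact Matrix.ext fun i => i.elim0
  | succ i => rfl

theorem outMatrix_mul (hA : ∀ j, A j * A (j + 1) = 0) (i : ℕ) : outMatrix r A i * A i = 0 := by
  cases i with
  | zero => exact Matrix.ext fun i => i.elim0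
  | succ i => exact hA i

theorem homologyLength_eq (N : Type*) [AddCommGroup N] [Module R N] (i : ℕ) :
    homologyLength r A N i = (Module.length R (MatHomology (outMatrix r A i) (A i) N) : ℕ∞) := by
  cases i with
  | succ i => exact (Module.coe_length R _).symm
  | zero =>
    refine (Module.coe_length R _).symm.trans (congrArg _ ?_)
    have htop : LinearMap.ker (matVec (outMatrix r A 0) N) = ⊤ :=
      Submodule.eq_top_iff'.2 fun v => funext fun i => i.elim0
    refine (Submodule.Quotient.equiv _ _ (LinearEquiv.ofTop _ htop) ?_).length_eq.symm
    ext v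
    constructor
    · rintro ⟨w, hw, rfl⟩
      exact hw
    · exact fun hv => ⟨⟨v, htop ▸ trivial⟩, hv, rfl⟩

/-- On a complex of free modules with finite length homology, some power of each element of the
maximal ideal is null-homotopic in any given degree. -/
theorem exists_nullHomotopy [IsLocalRing R] (hA : ∀ j, A j * A (j + 1) = 0)
    (hfin : ∀ i, Module.length R (MatHomology (outMatrix r A i) (A i) R) ≠ ⊤) {x : R}
    (hx : x ∈ IsLocalRing.maximalIdeal R) (i : ℕ) :
    ∃ (n : ℕ) (h : Matrix (Fin (r (i + 1))) (Fin (r i)) R)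
      (k : Matrix (Fin (r i)) (Fin (outRank r i)) R),
      A i * h + k * outMatrix r A i = x ^ n • 1 := by
  induction i with
  | zero =>
    obtain ⟨n, h, hh⟩ := MatHomology.exists_pow_smul_eq_mul (hfin 0) hx
      (1 : Matrix (Fin (r 0)) (Fin (r 0)) R) (Matrix.ext fun i => i.elim0)
    exact ⟨n, h, 0, by rw [hh, Matrix.zero_mul, add_zero]⟩
  | succ i ih =>
    obtain ⟨n, h, k, hhk⟩ := ih
    have hcycle : A i * (x ^ n • 1 - h * A i) = 0 := by
      have : A i * h = x ^ n • 1 - k * outMatrix r A i := eq_sub_of_add_eq hhk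
      rw [Matrix.mul_sub, ← Matrix.mul_assoc, this, Matrix.sub_mul, Matrix.mul_assoc,
        outMatrix_mul r A hA]
      simp
    obtain ⟨l, g, hg⟩ := MatHomology.exists_pow_smul_eq_mul (hfin (i + 1)) hx _ hcycle
    refine ⟨l + n, g, x ^ l • h, ?_⟩
    change A (i + 1) * g + (x ^ l • h) * A i = _
    rw [← hg, smul_sub, Matrix.smul_mul, sub_add_cancel, smul_smul, pow_add]

end Complex

/-- Seibert's theorem (upper-bound portion): let `G•` be a bounded-below complex of finite
free modules over a Noetherian local ring of characteristic `p`, given by matrices `A j`,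
with finite length homology, and let `N` be a finitely generated module of dimension `t`.
Then the homology of `F^e(G•) ⊗ N` (where `F^e` raises the matrix entries to the `q = p^e`
power) has finite length, bounded by `C·qᵗ`. -/
theorem seibert_upper_bound {R : Type*} [CommRing R] [IsNoetherianRing R] [IsLocalRing R]
    (p : ℕ) [Fact p.Prime] [CharP R p]
    (r : ℕ → ℕ) (A : ∀ j, Matrix (Fin (r j)) (Fin (r (j + 1))) R)
    (hcomplex : ∀ j, A j * A (j + 1) = 0)
    (hGfl : ∀ i, homologyLength r A R i < ⊤)
    (N : Type*) [AddCommGroup N] [Module R N] [Module.Finite R N]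
    (t : ℕ) (ht : ringKrullDim (R ⧸ Module.annihilator R N) = (t : WithBot ℕ∞))
    (i : ℕ) :
    ∃ C : ℕ, ∀ e : ℕ,
      homologyLength r (fun j => (A j).map (· ^ p ^ e)) N i ≤ ((C * (p ^ e) ^ t : ℕ) : ℕ∞) := by
  have hnull : ∀ x ∈ IsLocalRing.maximalIdeal R, _ := fun x hx =>
    exists_nullHomotopy r A hcomplex (fun j => by
      have := hGfl j
      rw [homologyLength_eq] at this
      exact fun h => by simp [h] at this) hx i
  rw [← Module.supportDim_eq_ringKrullDim_quotient_annihilator] at ht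
  obtain ⟨C, hC⟩ := MatHomology.exists_length_frobenius_le p (outMatrix_mul r A hcomplex i) hnull
    t N ht.le
  refine ⟨C, fun e => ?_⟩
  rw [homologyLength_eq, outMatrix_map]
  exact WithBot.coe_le_coe.2 (hC e)
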